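/- arXiv:1303.3754 — 4 statements merged into one kernel-verified Lean document; each statement's English description precedes it below -/
import Mathlib

section
/- For every t ≥ 1, with ŷ_t = x_tᵀ D_t^{-1} (I + c^{-1}·D_{t-1})^{-1} e_{t-1} the LASER prediction, the per-step inequality (y_t − ŷ_t)² + (−e_{t-1}ᵀ D_{t-1}^{-1} e_{t-1} + f_{t-1}) − (−e_tᵀ D_t^{-1} e_t + f_t) ≤ y_t² · x_tᵀ D_t^{-1} x_t holds. -/
open Matrix Finset

/-- `D₀ = (bc/(c−b)) I`, `D_t = (D_{t-1}⁻¹ + c⁻¹ I)⁻¹ + x_t x_tᵀ` for `t ≥ 1`. -/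
noncomputable def Dmat (d : ℕ) (b c : ℝ) (x : ℕ → Fin d → ℝ) :
    ℕ → Matrix (Fin d) (Fin d) ℝ
  | 0 => (b * c / (c - b)) • 1
  | (t + 1) => ((Dmat d b c x t)⁻¹ + c⁻¹ • 1)⁻¹ + vecMulVec (x (t + 1)) (x (t + 1))

/-- `e₀ = 0`, `e_t = (I + c⁻¹ D_{t-1})⁻¹ e_{t-1} + y_t x_t` for `t ≥ 1`. -/
noncomputable def evec (d : ℕ) (b c : ℝ) (x : ℕ → Fin d → ℝ) (y : ℕ → ℝ) :
    ℕ → Fin d → ℝ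
  | 0 => 0
  | (t + 1) => (1 + c⁻¹ • Dmat d b c x t)⁻¹ *ᵥ evec d b c x y t + y (t + 1) • x (t + 1)

/-- LASER prediction at round `t + 1`:
`ŷ_{t+1} = x_{t+1}ᵀ D_{t+1}⁻¹ (I + c⁻¹ D_t)⁻¹ e_t`. -/
noncomputable def laserPred (d : ℕ) (b c : ℝ) (x : ℕ → Fin d → ℝ) (y : ℕ → ℝ)
    (t : ℕ) : ℝ :=
  x (t + 1) ⬝ᵥ ((Dmat d b c x (t + 1))⁻¹ *ᵥ
    ((1 + c⁻¹ • Dmat d b c x t)⁻¹ *ᵥ evec d b c x y t))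

/-- Cumulative squared loss of LASER over `T` rounds. -/
noncomputable def laserLoss (d : ℕ) (b c : ℝ) (x : ℕ → Fin d → ℝ) (y : ℕ → ℝ)
    (T : ℕ) : ℝ :=
  ∑ t ∈ Finset.range T, (y (t + 1) - laserPred d b c x y t) ^ 2

/-- `f₀ = 0`, `f_t = f_{t-1} − e_{t-1}ᵀ (c I + D_{t-1})⁻¹ e_{t-1} + y_t²` for `t ≥ 1`. -/
noncomputable def fsc (d : ℕ) (b c : ℝ) (x : ℕ → Fin d → ℝ) (y : ℕ → ℝ) : ℕ → ℝ
  | 0 => 0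
  | (t + 1) => fsc d b c x y t
      - evec d b c x y t ⬝ᵥ ((c • (1 : Matrix (Fin d) (Fin d) ℝ)
          + Dmat d b c x t)⁻¹ *ᵥ evec d b c x y t)
      + (y (t + 1)) ^ 2

theorem Dmat_posDef_aux (d : ℕ) (b c : ℝ) (hb : 0 < b) (hbc : b < c)
    (x : ℕ → Fin d → ℝ) (t : ℕ) : (Dmat d b c x t).PosDef := by
  have hc : 0 < c := hb.trans hbc
  induction t with
  | zero =>
    rw [Dmat]
    exact PosDef.one.smul (div_pos (mul_pos hb hc) (sub_pos.2 hbc))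
  | succ t ih =>
    rw [Dmat]
    have h1 : (c⁻¹ • (1 : Matrix (Fin d) (Fin d) ℝ)).PosDef := PosDef.one.smul (inv_pos.2 hc)
    have h2 := posSemidef_vecMulVec_self_star (x (t + 1))
    rw [star_trivial] at h2
    exact (ih.inv.add h1).inv.add_posSemidef h2

theorem symm_dot_aux {d : ℕ} {A : Matrix (Fin d) (Fin d) ℝ} (hA : A.PosDef)
    (u v : Fin d → ℝ) : u ⬝ᵥ (A *ᵥ v) = v ⬝ᵥ (A *ᵥ u) := by
  have h : Aᵀ = A := by
    have := hA.isHermitian.eq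
    rwa [conjTranspose_eq_transpose_of_trivial] at this
  rw [dotProduct_mulVec, ← mulVec_transpose, h, dotProduct_comm]

theorem inv_mulVec_aux {d : ℕ} {A : Matrix (Fin d) (Fin d) ℝ} (hA : A.PosDef)
    (v : Fin d → ℝ) : A⁻¹ *ᵥ (A *ᵥ v) = v := by
  rw [mulVec_mulVec, nonsing_inv_mul _ ((isUnit_iff_isUnit_det _).1 hA.isUnit), one_mulVec]

theorem mulVec_inv_aux {d : ℕ} {A : Matrix (Fin d) (Fin d) ℝ} (hA : A.PosDef)
    (v : Fin d → ℝ) : A *ᵥ (A⁻¹ *ᵥ v) = v := by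
  rw [mulVec_mulVec, mul_nonsing_inv _ ((isUnit_iff_isUnit_det _).1 hA.isUnit), one_mulVec]

theorem laser_per_step_inequality (d : ℕ) (hd : 1 ≤ d) (b c : ℝ) (hb : 0 < b) (hbc : b < c)
    (x : ℕ → Fin d → ℝ) (y : ℕ → ℝ) :
    ∀ t : ℕ,
      (y (t + 1) - laserPred d b c x y t) ^ 2
        + (-(evec d b c x y t ⬝ᵥ ((Dmat d b c x t)⁻¹ *ᵥ evec d b c x y t))
            + fsc d b c x y t)
        - (-(evec d b c x y (t + 1) ⬝ᵥ ((Dmat d b c x (t + 1))⁻¹ *ᵥ evec d b c x y (t + 1)))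
            + fsc d b c x y (t + 1))
      ≤ (y (t + 1)) ^ 2 * (x (t + 1) ⬝ᵥ ((Dmat d b c x (t + 1))⁻¹ *ᵥ x (t + 1))) := by
  intro t
  have hc : 0 < c := hb.trans hbc
  have hD := Dmat_posDef_aux d b c hb hbc x t
  have hD' := Dmat_posDef_aux d b c hb hbc x (t + 1)
  have hDs : Dmat d b c x (t + 1) = ((Dmat d b c x t)⁻¹ + c⁻¹ • 1)⁻¹
    + vecMulVec (x (t + 1)) (x (t + 1)) := by rw [Dmat]
  rw [laserPred, fsc, evec]
  generalize Dmat d b c x (t + 1) = D' at *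
  generalize Dmat d b c x t = D at *
  generalize evec d b c x y t = e at *
  generalize fsc d b c x y t = f at *
  generalize x (t + 1) = z at *
  generalize y (t + 1) = r at *
  have hM : (1 + c⁻¹ • D).PosDef := PosDef.one.add (hD.smul (inv_pos.2 hc))
  have hK : (c • (1 : Matrix (Fin d) (Fin d) ℝ) + D).PosDef := (PosDef.one.smul hc).add hD
  have hP : (D⁻¹ + c⁻¹ • (1 : Matrix (Fin d) (Fin d) ℝ)).PosDef :=
    hD.inv.add (PosDef.one.smul (inv_pos.2 hc))
  have he := mulVec_inv_aux hM e
  generalize (1 + c⁻¹ • D)⁻¹ *ᵥ e = u at *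
  have hu := mulVec_inv_aux hD' u
  have hsym := symm_dot_aux hD'.inv u z
  have hzPz : 0 ≤ z ⬝ᵥ ((D⁻¹ + c⁻¹ • (1 : Matrix (Fin d) (Fin d) ℝ)) *ᵥ z) := by
    simpa using hP.posSemidef.dotProduct_mulVec_nonneg z
  have hKe : (c • (1 : Matrix (Fin d) (Fin d) ℝ) + D)⁻¹ *ᵥ e = c⁻¹ • u := by
    have : e = (c • (1 : Matrix (Fin d) (Fin d) ℝ) + D) *ᵥ (c⁻¹ • u) := by
      rw [← he]
      simp only [add_mulVec, smul_mulVec, mulVec_smul, one_mulVec, smul_add, smul_smul,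
        inv_mul_cancel₀ hc.ne', one_smul]
    rw [this, inv_mulVec_aux hK]
  have he2 : e = u + c⁻¹ • (D *ᵥ u) := by
    rw [← he]; simp only [add_mulVec, smul_mulVec, one_mulVec]
  have hDe : D⁻¹ *ᵥ e = D⁻¹ *ᵥ u + c⁻¹ • u := by
    rw [he2, mulVec_add, mulVec_smul, inv_mulVec_aux hD]
  have h1 : (D *ᵥ u) ⬝ᵥ (D⁻¹ *ᵥ u) = u ⬝ᵥ u := by
    rw [symm_dot_aux hD.inv, inv_mulVec_aux hD]
  have h2 : e ⬝ᵥ (D⁻¹ *ᵥ e) - e ⬝ᵥ ((c • (1 : Matrix (Fin d) (Fin d) ℝ) + D)⁻¹ *ᵥ e)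
      = u ⬝ᵥ ((D⁻¹ + c⁻¹ • (1 : Matrix (Fin d) (Fin d) ℝ)) *ᵥ u) := by
    rw [hKe, hDe, dotProduct_add, add_sub_cancel_right, he2, add_dotProduct, smul_dotProduct, h1]
    simp only [add_mulVec, smul_mulVec, one_mulVec, dotProduct_add, dotProduct_smul]
  generalize D⁻¹ + c⁻¹ • (1 : Matrix (Fin d) (Fin d) ℝ) = P at *
  rw [mulVec_add, mulVec_smul]
  generalize D'⁻¹ *ᵥ u = w at *
  have hPu : P *ᵥ u = w + (z ⬝ᵥ w) • (P *ᵥ z) := by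
    have h3 : vecMulVec z z *ᵥ w = (z ⬝ᵥ w) • z := by
      rw [vecMulVec_mulVec]; ext i; simp [mul_comm]
    rw [← hu, hDs, add_mulVec, mulVec_add, mulVec_inv_aux hP, h3, mulVec_smul]
  have h4 : u ⬝ᵥ (P *ᵥ z) = z ⬝ᵥ w + (z ⬝ᵥ w) * (z ⬝ᵥ (P *ᵥ z)) := by
    rw [symm_dot_aux hP, hPu, dotProduct_add, dotProduct_smul, smul_eq_mul]
  rw [hPu, dotProduct_add, dotProduct_smul, h4, smul_eq_mul] at h2
  simp only [add_dotProduct, dotProduct_add, smul_dotProduct, dotProduct_smul, smul_eq_mul]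
  rw [hsym]
  nlinarith [mul_nonneg (sq_nonneg (z ⬝ᵥ w)) hzPz]
end

section
/- Assume |y_t| ≤ Y for all t, for some Y ∈ ℝ. Then for every T ≥ 1 and every comparator sequence u_1, …, u_T ∈ ℝ^d, the cumulative loss of LASER satisfies L_T(LASER) ≤ b‖u_1‖² + c·V + L_T({u_t}) + Y²·Σ_{t=1}^{T} x_tᵀ D_t^{-1} x_t, where V = Σ_{t=1}^{T-1} ‖u_{t+1} − u_t‖² and L_T({u_t}) = Σ_{t=1}^{T} (y_t − u_tᵀ x_t)². -/
open Matrix Finset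

lemma aux_dot_symm {d : ℕ} {M : Matrix (Fin d) (Fin d) ℝ} (hM : M.PosDef) (a b : Fin d → ℝ) :
    a ⬝ᵥ (M *ᵥ b) = b ⬝ᵥ (M *ᵥ a) := by
  have h : Mᵀ = M := by simpa using hM.isHermitian.eq
  rw [dotProduct_mulVec, ← mulVec_transpose, h, dotProduct_comm]

lemma aux_nonneg {d : ℕ} {M : Matrix (Fin d) (Fin d) ℝ} (hM : M.PosDef) (a : Fin d → ℝ) :
    0 ≤ a ⬝ᵥ (M *ᵥ a) := by
  simpa using hM.posSemidef.dotProduct_mulVec_nonneg a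

lemma aux_mul_inv {d : ℕ} {M : Matrix (Fin d) (Fin d) ℝ} (hM : M.PosDef) (a : Fin d → ℝ) :
    M *ᵥ (M⁻¹ *ᵥ a) = a := by
  rw [mulVec_mulVec, Matrix.mul_nonsing_inv _ ((Matrix.isUnit_iff_isUnit_det _).1 hM.isUnit),
    one_mulVec]

lemma aux_step1 {d : ℕ} {M D : Matrix (Fin d) (Fin d) ℝ} (hM : M.PosDef) (hD : D.PosDef)
    (x p v : Fin d → ℝ) (y : ℝ) (hDM : D = M + vecMulVec x x) :
    (v - D⁻¹ *ᵥ (M *ᵥ p + y • x)) ⬝ᵥ (D *ᵥ (v - D⁻¹ *ᵥ (M *ᵥ p + y • x)))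
      + (y - x ⬝ᵥ (D⁻¹ *ᵥ (M *ᵥ p))) ^ 2 ≤
    (v - p) ⬝ᵥ (M *ᵥ (v - p)) + (y - v ⬝ᵥ x) ^ 2 + y ^ 2 * (x ⬝ᵥ (D⁻¹ *ᵥ x)) := by
  have hDa : ∀ a b : Fin d → ℝ, a ⬝ᵥ (D *ᵥ b) = a ⬝ᵥ (M *ᵥ b) + (x ⬝ᵥ a) * (x ⬝ᵥ b) := by
    intro a b
    rw [hDM, add_mulVec, dotProduct_add, vecMulVec_mulVec]
    simp [dotProduct_comm, mul_comm]
  have hw := aux_mul_inv hD (M *ᵥ p)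
  have hz := aux_mul_inv hD x
  rw [mulVec_add, mulVec_smul]
  generalize D⁻¹ *ᵥ (M *ᵥ p) = w at *
  generalize D⁻¹ *ᵥ x = z at *
  have ew : ∀ a, a ⬝ᵥ (M *ᵥ w) + (x ⬝ᵥ a) * (x ⬝ᵥ w) = a ⬝ᵥ (M *ᵥ p) := fun a => by
    rw [← hDa, hw]
  have ez : ∀ a, a ⬝ᵥ (M *ᵥ z) + (x ⬝ᵥ a) * (x ⬝ᵥ z) = x ⬝ᵥ a := fun a => by
    rw [← hDa, hz, dotProduct_comm]
  have hn := aux_nonneg hM (p - w)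
  rw [hDa, dotProduct_comm v x]
  simp only [mulVec_sub, mulVec_add, mulVec_smul, dotProduct_sub, sub_dotProduct, dotProduct_add,
    add_dotProduct, dotProduct_smul, smul_dotProduct, smul_eq_mul] at *
  have s1 := aux_dot_symm hM p v
  have s2 := aux_dot_symm hM w v
  have s3 := aux_dot_symm hM z v
  have s4 := aux_dot_symm hM z w
  have s5 := aux_dot_symm hM w p
  rw [s5] at hn
  rw [s1, s2, s3, s4]
  have e1 := ew v
  have e2 := ew w
  have e3 := ew p
  have e4 := ez v
  have e5 := ez w
  have e6 := ez z
  have e7 := ew z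
  rw [s5] at e2
  generalize v ⬝ᵥ M *ᵥ v = vv at *
  generalize v ⬝ᵥ M *ᵥ w = vw at *
  generalize v ⬝ᵥ M *ᵥ z = vz at *
  generalize v ⬝ᵥ M *ᵥ p = vp at *
  generalize w ⬝ᵥ M *ᵥ w = ww at *
  generalize w ⬝ᵥ M *ᵥ z = wz at *
  generalize p ⬝ᵥ M *ᵥ w = pw at *
  generalize p ⬝ᵥ M *ᵥ p = pp at *
  generalize z ⬝ᵥ M *ᵥ z = zz at *
  generalize x ⬝ᵥ v = xv at *
  generalize x ⬝ᵥ w = xw at *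
  generalize x ⬝ᵥ z = xz at *
  generalize x ⬝ᵥ p = xp at *
  have f1 : vp = vw + xv * xw := e1.symm
  have f2 : pw = ww + xw * xw := e2.symm
  have f3 : pp = pw + xp * xw := e3.symm
  have f4 : vz = xv - xv * xz := by linarith
  have f5 : wz = xw - xw * xz := by linarith
  have f6 : zz = xz - xz * xz := by linarith
  subst f1 f4 f5 f6 f3 f2
  nlinarith [hn]

lemma aux_step2 {d : ℕ} {D : Matrix (Fin d) (Fin d) ℝ} (hD : D.PosDef) {c : ℝ} (hc : 0 < c)
    (hN : (D⁻¹ + c⁻¹ • 1).PosDef) (a s : Fin d → ℝ) :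
    s ⬝ᵥ ((D⁻¹ + c⁻¹ • 1)⁻¹ *ᵥ s) ≤ a ⬝ᵥ (D *ᵥ a) + c * ((s - a) ⬝ᵥ (s - a)) := by
  have hr := aux_mul_inv hN s
  generalize (D⁻¹ + c⁻¹ • 1)⁻¹ *ᵥ s = r at *
  have hk := aux_mul_inv hD r
  rw [add_mulVec, smul_mulVec, one_mulVec] at hr
  generalize D⁻¹ *ᵥ r = k at *
  have h1 := aux_nonneg hD (a - k)
  have h2 : 0 ≤ c * (((s - a) - c⁻¹ • r) ⬝ᵥ ((s - a) - c⁻¹ • r)) :=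
    mul_nonneg hc.le (by simpa using dotProduct_star_self_nonneg ((s - a) - c⁻¹ • r))
  have h3 := aux_dot_symm hD k a
  rw [hk] at h3
  have hs : s ⬝ᵥ r = k ⬝ᵥ r + c⁻¹ * (r ⬝ᵥ r) := by
    rw [← hr, add_dotProduct, smul_dotProduct, smul_eq_mul]
  rw [mulVec_sub, hk] at h1
  have h4 : c * (((s - a) - c⁻¹ • r) ⬝ᵥ ((s - a) - c⁻¹ • r)) =
      c * ((s - a) ⬝ᵥ (s - a)) - 2 * ((s - a) ⬝ᵥ r) + c⁻¹ * (r ⬝ᵥ r) := by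
    generalize s - a = g
    simp only [dotProduct_sub, sub_dotProduct, dotProduct_smul, smul_dotProduct, smul_eq_mul,
      dotProduct_comm r g]
    field_simp
    ring
  rw [h4] at h2
  simp only [dotProduct_sub, sub_dotProduct] at h1 h2 ⊢
  linarith

lemma aux_posdef_N {d : ℕ} {D : Matrix (Fin d) (Fin d) ℝ} (hD : D.PosDef) {c : ℝ} (hc : 0 < c) :
    (D⁻¹ + c⁻¹ • 1).PosDef :=
  hD.inv.add (Matrix.PosDef.one.smul (inv_pos.2 hc))

lemma aux_D {d : ℕ} {b c : ℝ} (hb : 0 < b) (hbc : b < c) (x : ℕ → Fin d → ℝ) (t : ℕ) :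
    (Dmat d b c x t).PosDef := by
  have hc : 0 < c := hb.trans hbc
  induction t with
  | zero =>
    exact Matrix.PosDef.one.smul (div_pos (mul_pos hb hc) (sub_pos.2 hbc))
  | succ t ih =>
    refine (aux_posdef_N ih hc).inv.add_posSemidef ?_
    simpa using Matrix.posSemidef_vecMulVec_self_star (x (t + 1))

lemma aux_h {d : ℕ} {D : Matrix (Fin d) (Fin d) ℝ} (hD : D.PosDef) {c : ℝ} (e : Fin d → ℝ) :
    (1 + c⁻¹ • D)⁻¹ *ᵥ e = (D⁻¹ + c⁻¹ • 1)⁻¹ *ᵥ (D⁻¹ *ᵥ e) := by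
  rw [mulVec_mulVec, ← Matrix.mul_inv_rev, mul_add,
    Matrix.mul_nonsing_inv _ ((Matrix.isUnit_iff_isUnit_det _).1 hD.isUnit)]
  simp

lemma aux_round {d : ℕ} {b c : ℝ} (hb : 0 < b) (hbc : b < c) (x : ℕ → Fin d → ℝ) (y : ℕ → ℝ)
    (Y : ℝ) (hY : ∀ t : ℕ, |y (t + 1)| ≤ Y) (t : ℕ) (v p q : Fin d → ℝ)
    (hp : p = (Dmat d b c x t)⁻¹ *ᵥ evec d b c x y t)
    (hq : q = (Dmat d b c x (t + 1))⁻¹ *ᵥ evec d b c x y (t + 1)) :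
    (v - q) ⬝ᵥ (Dmat d b c x (t + 1) *ᵥ (v - q)) + (y (t + 1) - laserPred d b c x y t) ^ 2 ≤
    (v - p) ⬝ᵥ (((Dmat d b c x t)⁻¹ + c⁻¹ • 1)⁻¹ *ᵥ (v - p)) + (y (t + 1) - v ⬝ᵥ x (t + 1)) ^ 2
      + Y ^ 2 * (x (t + 1) ⬝ᵥ ((Dmat d b c x (t + 1))⁻¹ *ᵥ x (t + 1))) := by
  have hc : 0 < c := hb.trans hbc
  have hD := aux_D hb hbc x t
  have hD1 := aux_D hb hbc x (t + 1)
  have hN := (aux_posdef_N hD hc).inv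
  have key := aux_step1 hN hD1 (x (t + 1)) p v (y (t + 1)) rfl
  have hh := aux_h hD (c := c) (evec d b c x y t)
  rw [← hp] at hh
  have hq' : q = (Dmat d b c x (t + 1))⁻¹ *ᵥ
      (((Dmat d b c x t)⁻¹ + c⁻¹ • 1)⁻¹ *ᵥ p + y (t + 1) • x (t + 1)) := by
    rw [hq, ← hh]; rfl
  have hl : laserPred d b c x y t = x (t + 1) ⬝ᵥ ((Dmat d b c x (t + 1))⁻¹ *ᵥ
      (((Dmat d b c x t)⁻¹ + c⁻¹ • 1)⁻¹ *ᵥ p)) := by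
    rw [← hh]; rfl
  rw [← hq', ← hl] at key
  have hy : y (t + 1) ^ 2 ≤ Y ^ 2 := sq_le_sq.2 ((hY t).trans (le_abs_self Y))
  have := mul_le_mul_of_nonneg_right hy (aux_nonneg hD1.inv (x (t + 1)))
  linarith

lemma aux_main {d : ℕ} {b c : ℝ} (hb : 0 < b) (hbc : b < c) (x : ℕ → Fin d → ℝ) (y : ℕ → ℝ)
    (Y : ℝ) (hY : ∀ t : ℕ, |y (t + 1)| ≤ Y) (u : ℕ → Fin d → ℝ) (n : ℕ) (p : Fin d → ℝ)
    (hp : p = (Dmat d b c x n)⁻¹ *ᵥ evec d b c x y n) :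
    laserLoss d b c x y n
      + (u (n + 1) - p) ⬝ᵥ (((Dmat d b c x n)⁻¹ + c⁻¹ • 1)⁻¹ *ᵥ (u (n + 1) - p)) ≤
      b * (u 1 ⬝ᵥ u 1)
        + c * ∑ t ∈ Finset.range n,
            (u (t + 2) - u (t + 1)) ⬝ᵥ (u (t + 2) - u (t + 1))
        + ∑ t ∈ Finset.range n, (y (t + 1) - u (t + 1) ⬝ᵥ x (t + 1)) ^ 2
        + Y ^ 2 * ∑ t ∈ Finset.range n,
            x (t + 1) ⬝ᵥ ((Dmat d b c x (t + 1))⁻¹ *ᵥ x (t + 1)) := by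
  have hc : 0 < c := hb.trans hbc
  have hcb : 0 < c - b := sub_pos.2 hbc
  induction n generalizing p with
  | zero =>
    have h0 : ((Dmat d b c x 0)⁻¹ + c⁻¹ • 1)⁻¹ = b • (1 : Matrix (Fin d) (Fin d) ℝ) := by
      have h1 : (Dmat d b c x 0)⁻¹ = ((c - b) / (b * c)) • (1 : Matrix (Fin d) (Fin d) ℝ) := by
        apply Matrix.inv_eq_right_inv
        simp only [Dmat, Matrix.smul_mul, Matrix.mul_smul, smul_smul, Matrix.one_mul]
        rw [show (c - b) / (b * c) * (b * c / (c - b)) = 1 by field_simp, one_smul]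
      apply Matrix.inv_eq_right_inv
      rw [h1, ← add_smul]
      simp only [Matrix.smul_mul, Matrix.mul_smul, smul_smul, Matrix.one_mul]
      rw [show b * ((c - b) / (b * c) + c⁻¹) = 1 by field_simp; ring, one_smul]
    have : p = 0 := by rw [hp]; simp [evec]
    rw [h0, this]
    simp [laserLoss, smul_mulVec]
  | succ n ih =>
    have h1 := ih _ rfl
    have h2 := aux_round hb hbc x y Y hY n (u (n + 1)) _ p rfl hp
    have hD := aux_D hb hbc x (n + 1)
    have h3 := aux_step2 hD hc (aux_posdef_N hD hc) (u (n + 1) - p) (u (n + 1 + 1) - p)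
    rw [sub_sub_sub_cancel_right] at h3
    rw [laserLoss] at h1 ⊢
    simp only [Finset.sum_range_succ, mul_add] at h1 ⊢
    linarith

theorem laser_cumulative_loss_bound (d : ℕ) (hd : 1 ≤ d) (b c : ℝ)
    (hb : 0 < b) (hbc : b < c)
    (x : ℕ → Fin d → ℝ) (y : ℕ → ℝ) (Y : ℝ) (hY : ∀ t : ℕ, |y (t + 1)| ≤ Y)
    (T : ℕ) (hT : 1 ≤ T) (u : ℕ → Fin d → ℝ) :
    laserLoss d b c x y T ≤
      b * (u 1 ⬝ᵥ u 1)
        + c * ∑ t ∈ Finset.range (T - 1),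
            (u (t + 2) - u (t + 1)) ⬝ᵥ (u (t + 2) - u (t + 1))
        + ∑ t ∈ Finset.range T, (y (t + 1) - u (t + 1) ⬝ᵥ x (t + 1)) ^ 2
        + Y ^ 2 * ∑ t ∈ Finset.range T,
            x (t + 1) ⬝ᵥ ((Dmat d b c x (t + 1))⁻¹ *ᵥ x (t + 1)) := by
  obtain ⟨n, rfl⟩ : ∃ n, T = n + 1 := ⟨T - 1, by omega⟩
  have h1 := aux_main hb hbc x y Y hY u n _ rfl
  have h2 := aux_round hb hbc x y Y hY n (u (n + 1)) _ _ rfl rfl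
  have h3 := aux_nonneg (aux_D hb hbc x (n + 1))
    (u (n + 1) - (Dmat d b c x (n + 1))⁻¹ *ᵥ evec d b c x y (n + 1))
  rw [laserLoss] at h1 ⊢
  simp only [Finset.sum_range_succ, mul_add, Nat.add_sub_cancel] at h1 ⊢
  linarith
end

section
/- Assume ‖x_t‖² ≤ X² and |y_t| ≤ Y for all t. Then for every T ≥ 1 and every comparator sequence u_1, …, u_T ∈ ℝ^d, L_T(LASER) ≤ b‖u_1‖² + L_T({u_t}) + Y²·ln det((1/b)·D_T) + c^{-1}·Y²·Tr(D_0) + c·V + c^{-1}·Y²·T·d·max{ (3X² + √(X⁴ + 4X²c))/2, b + X² }, where V = Σ_{t=1}^{T-1} ‖u_{t+1} − u_t‖² and L_T({u_t}) = Σ_{t=1}^{T} (y_t − u_tᵀ x_t)². -/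
open Matrix Finset

theorem sym' {d} {A : Matrix (Fin d) (Fin d) ℝ} (hA : A.PosDef) (u v : Fin d → ℝ) :
    u ⬝ᵥ A *ᵥ v = v ⬝ᵥ A *ᵥ u := by
  have h : Aᵀ = A := by simpa using hA.1.eq
  rw [dotProduct_mulVec, ← mulVec_transpose, h, dotProduct_comm]

theorem qnn {d} {A : Matrix (Fin d) (Fin d) ℝ} (hA : A.PosDef) (u : Fin d → ℝ) :
    0 ≤ u ⬝ᵥ A *ᵥ u := by
  simpa using hA.posSemidef.dotProduct_mulVec_nonneg u

theorem mul_inv_vec {d} {A : Matrix (Fin d) (Fin d) ℝ} (hA : A.PosDef) (u : Fin d → ℝ) :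
    A *ᵥ (A⁻¹ *ᵥ u) = u := by
  rw [mulVec_mulVec, mul_nonsing_inv _ hA.det_pos.ne'.isUnit, one_mulVec]

theorem inv_mul_vec {d} {A : Matrix (Fin d) (Fin d) ℝ} (hA : A.PosDef) (u : Fin d → ℝ) :
    A⁻¹ *ᵥ (A *ᵥ u) = u := by
  rw [mulVec_mulVec, nonsing_inv_mul _ hA.det_pos.ne'.isUnit, one_mulVec]

theorem smul_one_pd (d : ℕ) {c : ℝ} (hc : 0 < c) : (c • (1 : Matrix (Fin d) (Fin d) ℝ)).PosDef :=
  PosDef.one.smul hc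

theorem pd_add_vv {d} {A : Matrix (Fin d) (Fin d) ℝ} (hA : A.PosDef) (x : Fin d → ℝ) :
    (A + vecMulVec x x).PosDef := by
  have := posSemidef_vecMulVec_self_star (R := ℝ) x
  simp at this
  exact hA.add_posSemidef this

theorem addvv {d} (A : Matrix (Fin d) (Fin d) ℝ) (x u : Fin d → ℝ) :
    (A + vecMulVec x x) *ᵥ u = A *ᵥ u + (x ⬝ᵥ u) • x := by
  rw [add_mulVec, vecMulVec_mulVec]; simp

/-- completing the square -/
theorem complete_sq {d} {S : Matrix (Fin d) (Fin d) ℝ} (hS : S.PosDef) (w z : Fin d → ℝ) :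
    - (z ⬝ᵥ S⁻¹ *ᵥ z) ≤ w ⬝ᵥ S *ᵥ w - 2 * (w ⬝ᵥ z) := by
  have h := qnn hS (w - S⁻¹ *ᵥ z)
  have h2 := sym' hS (S⁻¹ *ᵥ z) w
  simp only [mulVec_sub, mul_inv_vec hS, dotProduct_sub, sub_dotProduct] at h h2
  rw [h2, dotProduct_comm _ z] at h
  rw [dotProduct_comm w z, dotProduct_comm z (S⁻¹ *ᵥ z)]
  linarith

theorem G_eq {d} {D : Matrix (Fin d) (Fin d) ℝ} {c : ℝ} (hc : 0 < c) (hD : D.PosDef) :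
    (1 + c⁻¹ • D)⁻¹ = c • (c • 1 + D)⁻¹ := by
  have : 1 + c⁻¹ • D = c⁻¹ • (c • 1 + D) := by
    rw [smul_add, smul_smul, inv_mul_cancel₀ hc.ne', one_smul]
  rw [this]
  have hS := (smul_one_pd d hc).add hD
  apply inv_eq_right_inv
  rw [smul_mul_smul_comm, mul_nonsing_inv _ hS.det_pos.ne'.isUnit, inv_mul_cancel₀ hc.ne',
    one_smul]

theorem A_eq {d} {D : Matrix (Fin d) (Fin d) ℝ} {c : ℝ} (hc : 0 < c) (hD : D.PosDef) :
    (D⁻¹ + c⁻¹ • 1)⁻¹ = c • 1 - c ^ 2 • (c • 1 + D)⁻¹ := by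
  have hS := (smul_one_pd d hc).add hD
  have h1 := mul_nonsing_inv _ hS.det_pos.ne'.isUnit
  have h2 := nonsing_inv_mul _ hD.det_pos.ne'.isUnit
  have h3 : D⁻¹ + c⁻¹ • 1 = c⁻¹ • (D⁻¹ * (c • 1 + D)) := by
    rw [mul_add, h2, smul_add, mul_smul_comm, mul_one, smul_smul, inv_mul_cancel₀ hc.ne', one_smul]
  apply inv_eq_right_inv
  rw [mul_sub]
  have h4 : (D⁻¹ + c⁻¹ • 1) * (c ^ 2 • (c • 1 + D)⁻¹) = c • D⁻¹ := by
    rw [h3, smul_mul_smul_comm, mul_assoc, h1, mul_one]; congr 1; field_simp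
  rw [h4, mul_smul_comm, mul_one, smul_add, smul_smul, mul_inv_cancel₀ hc.ne', one_smul]
  abel

theorem A_pd {d} {D : Matrix (Fin d) (Fin d) ℝ} {c : ℝ} (hc : 0 < c) (hD : D.PosDef) :
    (D⁻¹ + c⁻¹ • 1)⁻¹.PosDef := (hD.inv.add (smul_one_pd d (inv_pos.2 hc))).inv

/-- the inf-convolution inequality -/
theorem infconv {d} {D : Matrix (Fin d) (Fin d) ℝ} {c : ℝ} (hc : 0 < c) (hD : D.PosDef)
    (v w e : Fin d → ℝ) :
    v ⬝ᵥ (D⁻¹ + c⁻¹ • 1)⁻¹ *ᵥ v - 2 * (v ⬝ᵥ (1 + c⁻¹ • D)⁻¹ *ᵥ e) - e ⬝ᵥ (c • 1 + D)⁻¹ *ᵥ e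
      ≤ w ⬝ᵥ D *ᵥ w - 2 * (w ⬝ᵥ e) + c * ((v - w) ⬝ᵥ (v - w)) := by
  have hS := (smul_one_pd d hc).add hD
  rw [A_eq hc hD, G_eq hc hD]
  have h := complete_sq hS w (e + c • v)
  have h2 := sym' hS.inv e v
  simp only [add_mulVec, sub_mulVec, smul_mulVec, one_mulVec, mulVec_add, mulVec_smul,
    dotProduct_add, add_dotProduct, dotProduct_sub, sub_dotProduct, dotProduct_smul,
    smul_dotProduct, smul_eq_mul] at h h2 ⊢
  rw [h2] at h
  rw [dotProduct_comm v w]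
  linarith

theorem step1 {d} {D : Matrix (Fin d) (Fin d) ℝ} {c : ℝ} (hc : 0 < c) (hD : D.PosDef)
    (e : Fin d → ℝ) :
    e ⬝ᵥ D⁻¹ *ᵥ e - e ⬝ᵥ (c • 1 + D)⁻¹ *ᵥ e =
     ((1 + c⁻¹ • D)⁻¹ *ᵥ e) ⬝ᵥ ((D⁻¹ + c⁻¹ • 1) *ᵥ ((1 + c⁻¹ • D)⁻¹ *ᵥ e)) := by
  have hS := (smul_one_pd d hc).add hD
  rw [G_eq hc hD]
  obtain ⟨p, hp⟩ : ∃ p, p = (c • 1 + D)⁻¹ *ᵥ e := ⟨_, rfl⟩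
  have he : e = c • p + D *ᵥ p := by
    have := mul_inv_vec hS e
    rw [← hp] at this
    rw [← this]; simp [add_mulVec, smul_mulVec]
  rw [smul_mulVec, ← hp]
  have h1 := sym' hD.inv (D *ᵥ p) p
  rw [inv_mul_vec hD] at h1
  rw [he]
  simp only [add_mulVec, sub_mulVec, smul_mulVec, one_mulVec, mulVec_add, mulVec_smul,
    dotProduct_add, add_dotProduct, dotProduct_sub, sub_dotProduct, dotProduct_smul,
    smul_dotProduct, smul_eq_mul, inv_mul_vec hD, h1]
  field_simp
  ring

/-- the rank-one step -/
theorem step2 {d} {A : Matrix (Fin d) (Fin d) ℝ} (hA : A.PosDef) (x g : Fin d → ℝ) :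
    (x ⬝ᵥ (A + vecMulVec x x)⁻¹ *ᵥ g) ^ 2 + g ⬝ᵥ (A + vecMulVec x x)⁻¹ *ᵥ g
      ≤ g ⬝ᵥ A⁻¹ *ᵥ g := by
  have hB := pd_add_vv hA x
  obtain ⟨h, hh⟩ : ∃ h, h = (A + vecMulVec x x)⁻¹ *ᵥ g := ⟨_, rfl⟩
  have hg : g = A *ᵥ h + (x ⬝ᵥ h) • x := by
    rw [← addvv, hh, mul_inv_vec hB]
  rw [← hh]
  have h1 := sym' hA.inv (A *ᵥ h) x
  rw [inv_mul_vec hA] at h1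
  have h2 := mul_nonneg (sq_nonneg (x ⬝ᵥ h)) (qnn hA.inv x)
  rw [hg]
  simp only [mulVec_add, mulVec_smul,
    dotProduct_add, add_dotProduct, dotProduct_smul,
    smul_dotProduct, smul_eq_mul, inv_mul_vec hA, h1]
  rw [dotProduct_comm (A *ᵥ h) h]
  nlinarith

theorem logdet {d} {A : Matrix (Fin d) (Fin d) ℝ} (hA : A.PosDef) (x : Fin d → ℝ) :
    x ⬝ᵥ (A + vecMulVec x x)⁻¹ *ᵥ x ≤
      Real.log (A + vecMulVec x x).det - Real.log A.det := by
  have hB := pd_add_vv hA x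
  obtain ⟨h, hh⟩ : ∃ h, h = (A + vecMulVec x x)⁻¹ *ᵥ x := ⟨_, rfl⟩
  have hg : A *ᵥ h + (x ⬝ᵥ h) • x = x := by
    rw [← addvv, hh, mul_inv_vec hB]
  rw [← hh]
  have hs := qnn hA.inv x
  set s := x ⬝ᵥ A⁻¹ *ᵥ x with hsdef
  have h3 : x ⬝ᵥ h + (x ⬝ᵥ h) * s = s := by
    have := congrArg (fun v => x ⬝ᵥ A⁻¹ *ᵥ v) hg
    simpa [mulVec_add, mulVec_smul, inv_mul_vec hA] using this
  have hdet : (A + vecMulVec x x).det = A.det * (1 + s) := by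
    have h0 : A + vecMulVec x x = A * (1 + vecMulVec (A⁻¹ *ᵥ x) x) := by
      rw [mul_add, mul_one, mul_vecMulVec, mul_inv_vec hA]
    rw [h0, det_mul, vecMulVec_eq Unit, det_one_add_replicateCol_mul_replicateRow]
  have h1s : 0 < 1 + s := by linarith
  rw [hdet, Real.log_mul hA.det_pos.ne' h1s.ne']
  have := Real.one_sub_inv_le_log_of_pos h1s
  have h4 : x ⬝ᵥ h = 1 - (1 + s)⁻¹ := by field_simp; linarith
  linarith

theorem logdet_le_trace {d} {B : Matrix (Fin d) (Fin d) ℝ} (hB : B.PosDef) :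
    Real.log B.det ≤ B.trace - d := by
  rw [hB.1.det_eq_prod_eigenvalues, hB.1.trace_eq_sum_eigenvalues]
  simp only [RCLike.ofReal_real_eq_id, id]
  rw [Real.log_prod (fun i _ => (hB.eigenvalues_pos i).ne')]
  have : (d : ℝ) = ∑ i : Fin d, (1 : ℝ) := by simp
  rw [this, ← Finset.sum_sub_distrib]
  exact Finset.sum_le_sum fun i _ => Real.log_le_sub_one_of_pos (hB.eigenvalues_pos i)

theorem logdetA {d} {D : Matrix (Fin d) (Fin d) ℝ} {c : ℝ} (hc : 0 < c) (hD : D.PosDef) :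
    Real.log D.det - c⁻¹ * D.trace ≤ Real.log ((D⁻¹ + c⁻¹ • 1)⁻¹).det := by
  have hP : (1 + c⁻¹ • D).PosDef := PosDef.one.add (hD.smul (inv_pos.2 hc))
  have h3 : D⁻¹ + c⁻¹ • 1 = D⁻¹ * (1 + c⁻¹ • D) := by
    rw [mul_add, mul_smul_comm, nonsing_inv_mul _ hD.det_pos.ne'.isUnit, mul_one]
  have h4 := logdet_le_trace hP
  rw [trace_add, trace_smul, trace_one, Fintype.card_fin, smul_eq_mul] at h4
  rw [h3, det_nonsing_inv, det_mul, det_nonsing_inv, Ring.inverse_eq_inv',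
    Real.log_inv, Real.log_mul (inv_ne_zero hD.det_pos.ne') hP.det_pos.ne', Real.log_inv]
  linarith

theorem cs {d} (x v : Fin d → ℝ) : (x ⬝ᵥ v) ^ 2 ≤ (x ⬝ᵥ x) * (v ⬝ᵥ v) := by
  have := Finset.sum_mul_sq_le_sq_mul_sq Finset.univ x v
  simpa [dotProduct, sq] using this

theorem Dmat_pd (d : ℕ) {b c : ℝ} (hb : 0 < b) (hbc : b < c) (x : ℕ → Fin d → ℝ) (t : ℕ) :
    (Dmat d b c x t).PosDef := by
  induction t with
  | zero =>
    exact smul_one_pd d (div_pos (mul_pos hb (hb.trans hbc)) (sub_pos.2 hbc))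
  | succ t ih => exact pd_add_vv (A_pd (hb.trans hbc) ih) _

theorem A1 (d : ℕ) {b c : ℝ} (hb : 0 < b) (hbc : b < c) (x : ℕ → Fin d → ℝ) :
    ((Dmat d b c x 0)⁻¹ + c⁻¹ • 1)⁻¹ = b • 1 := by
  have hc := hb.trans hbc
  have h1 : c - b ≠ 0 := (sub_pos.2 hbc).ne'
  have h : (Dmat d b c x 0)⁻¹ = ((c - b) / (b * c)) • 1 := by
    apply inv_eq_right_inv
    rw [Dmat, smul_mul_smul_comm, mul_one]
    rw [show b * c / (c - b) * ((c - b) / (b * c)) = 1 by field_simp, one_smul]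
  rw [h]
  apply inv_eq_right_inv
  rw [← add_smul, smul_mul_smul_comm, mul_one]
  rw [show ((c - b) / (b * c) + c⁻¹) * b = 1 by field_simp; ring, one_smul]

theorem Dbound (d : ℕ) {b c : ℝ} (hb : 0 < b) (hbc : b < c) (x : ℕ → Fin d → ℝ) {X M : ℝ}
    (hx : ∀ t : ℕ, x (t + 1) ⬝ᵥ x (t + 1) ≤ X ^ 2) (h1 : b + X ^ 2 ≤ M)
    (h2 : c * X ^ 2 + X ^ 2 * M ≤ M ^ 2) (t : ℕ) (v : Fin d → ℝ) :
    v ⬝ᵥ Dmat d b c x (t + 1) *ᵥ v ≤ M * (v ⬝ᵥ v) := by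
  have hc := hb.trans hbc
  have hM : 0 < M := by nlinarith [sq_nonneg X]
  have hvv : ∀ v : Fin d → ℝ, 0 ≤ v ⬝ᵥ v := fun v => by
    simpa using qnn (PosDef.one (R := ℝ) (n := Fin d)) v
  have hxv : (x (t + 1) ⬝ᵥ v) ^ 2 ≤ X ^ 2 * (v ⬝ᵥ v) :=
    (cs _ _).trans (mul_le_mul_of_nonneg_right (hx t) (hvv v))
  rw [Dmat, addvv, dotProduct_add, dotProduct_smul, smul_eq_mul, dotProduct_comm v (x _), ← sq]
  induction t generalizing v with
  | zero =>
    rw [A1 d hb hbc]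
    simp only [smul_mulVec, one_mulVec, dotProduct_smul, smul_eq_mul]
    nlinarith [hvv v]
  | succ t ih =>
    have h := infconv hc (Dmat_pd d hb hbc x (t+1)) v ((c / (c + M)) • v) 0
    have ih' := ih v ((cs _ _).trans (mul_le_mul_of_nonneg_right (hx t) (hvv v)))
    rw [sq, dotProduct_comm _ v, ← smul_eq_mul, dotProduct_comm v, ← dotProduct_comm v,
      smul_eq_mul] at ih'
    have ih2 : v ⬝ᵥ Dmat d b c x (t + 1) *ᵥ v ≤ M * (v ⬝ᵥ v) := by
      rw [Dmat, addvv, dotProduct_add, dotProduct_smul, smul_eq_mul]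
      simpa [dotProduct_comm] using ih'
    have e1 : v - (c / (c + M)) • v = (M / (c + M)) • v := by
      rw [show (M / (c + M)) = 1 - c / (c + M) by field_simp; ring, sub_smul, one_smul]
    rw [e1] at h
    simp only [mulVec_smul, dotProduct_smul, smul_dotProduct, smul_eq_mul, mulVec_zero,
      dotProduct_zero, zero_dotProduct] at h
    have h5 : (c / (c + M)) * ((c / (c + M)) * (v ⬝ᵥ Dmat d b c x (t + 1) *ᵥ v)) ≤
      (c / (c + M)) * ((c / (c + M)) * (M * (v ⬝ᵥ v))) := by gcongr
    have h6 : (c / (c + M)) * ((c / (c + M)) * (M * (v ⬝ᵥ v))) +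
       c * (M / (c + M) * (M / (c + M) * (v ⬝ᵥ v))) = c * M / (c + M) * (v ⬝ᵥ v) := by
      field_simp
    have h7 : c * M / (c + M) + X ^ 2 ≤ M := by
      rw [← le_sub_iff_add_le, div_le_iff₀ (by positivity)]; nlinarith
    have := mul_le_mul_of_nonneg_right h7 (hvv v)
    nlinarith

theorem trace_bound {d} {D : Matrix (Fin d) (Fin d) ℝ} {M : ℝ}
    (h : ∀ v, v ⬝ᵥ D *ᵥ v ≤ M * (v ⬝ᵥ v)) : D.trace ≤ d * M := by
  have : ∀ i, D i i ≤ M := fun i => by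
    have := h (Pi.single i 1)
    simpa using this
  calc D.trace ≤ ∑ i : Fin d, M := Finset.sum_le_sum fun i _ => this i
    _ = d * M := by simp

noncomputable def fv (d : ℕ) (b c : ℝ) (x : ℕ → Fin d → ℝ) (y : ℕ → ℝ) : ℕ → ℝ
  | 0 => 0
  | (t + 1) => fv d b c x y t
      - evec d b c x y t ⬝ᵥ (c • 1 + Dmat d b c x t)⁻¹ *ᵥ evec d b c x y t + y (t + 1) ^ 2

theorem part1 (d : ℕ) {b c : ℝ} (hb : 0 < b) (hbc : b < c) (x : ℕ → Fin d → ℝ) (y : ℕ → ℝ)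
    (T : ℕ) : laserLoss d b c x y T ≤ fv d b c x y T
      - evec d b c x y T ⬝ᵥ (Dmat d b c x T)⁻¹ *ᵥ evec d b c x y T
      + ∑ t ∈ Finset.range T,
        y (t + 1) ^ 2 * (x (t + 1) ⬝ᵥ (Dmat d b c x (t + 1))⁻¹ *ᵥ x (t + 1)) := by
  have hc := hb.trans hbc
  induction T with
  | zero => simp [laserLoss, fv, evec]
  | succ T ih =>
    have hD := Dmat_pd d hb hbc x T
    have hD' := Dmat_pd d hb hbc x (T + 1)
    unfold laserLoss at ih ⊢
    rw [Finset.sum_range_succ, Finset.sum_range_succ]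
    have h1 := step1 hc hD (evec d b c x y T)
    have h2 := step2 (A_pd hc hD) (x (T + 1)) ((1 + c⁻¹ • Dmat d b c x T)⁻¹ *ᵥ evec d b c x y T)
    rw [nonsing_inv_nonsing_inv _
      (hD.inv.add (smul_one_pd d (inv_pos.2 hc))).det_pos.ne'.isUnit, ← h1] at h2
    rw [show ((Dmat d b c x T)⁻¹ + c⁻¹ • 1)⁻¹ + vecMulVec (x (T + 1)) (x (T + 1)) =
      Dmat d b c x (T + 1) from rfl] at h2
    rw [evec, fv, laserPred]
    set g := (1 + c⁻¹ • Dmat d b c x T)⁻¹ *ᵥ evec d b c x y T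
    have h3 := sym' hD'.inv g (x (T + 1))
    simp only [mulVec_add, mulVec_smul, dotProduct_add, add_dotProduct, dotProduct_smul,
      smul_dotProduct, smul_eq_mul, h3]
    nlinarith

theorem part2 (d : ℕ) {b c : ℝ} (hb : 0 < b) (hbc : b < c) (x : ℕ → Fin d → ℝ) (y : ℕ → ℝ)
    (u : ℕ → Fin d → ℝ) (T : ℕ) :
    fv d b c x y (T + 1) + u (T + 1) ⬝ᵥ Dmat d b c x (T + 1) *ᵥ u (T + 1)
      - 2 * (u (T + 1) ⬝ᵥ evec d b c x y (T + 1)) ≤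
    b * (u 1 ⬝ᵥ u 1)
        + ∑ t ∈ Finset.range (T + 1), (y (t + 1) - u (t + 1) ⬝ᵥ x (t + 1)) ^ 2
        + c * ∑ t ∈ Finset.range T,
            (u (t + 2) - u (t + 1)) ⬝ᵥ (u (t + 2) - u (t + 1)) := by
  have hc := hb.trans hbc
  induction T with
  | zero =>
    rw [Dmat, A1 d hb hbc, addvv]
    simp [fv, evec, smul_mulVec]
    rw [dotProduct_comm (x 1)]
    nlinarith
  | succ T ih =>
    have hD := Dmat_pd d hb hbc x (T + 1)
    have h := infconv hc hD (u (T + 2)) (u (T + 1)) (evec d b c x y (T + 1))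
    rw [Finset.sum_range_succ _ (T + 1), Finset.sum_range_succ
      (fun t => (u (t + 2) - u (t + 1)) ⬝ᵥ (u (t + 2) - u (t + 1))) T]
    rw [fv, evec.eq_2 _ _ _ _ _ (T + 1), Dmat.eq_2 _ _ _ _ (T + 1), addvv]
    simp only [dotProduct_add, dotProduct_smul, smul_eq_mul]
    rw [dotProduct_comm (x _)]
    simp only [show T + 1 + 1 = T + 2 from rfl] at *
    nlinarith

theorem part3 (d : ℕ) {b c : ℝ} (hb : 0 < b) (hbc : b < c) (x : ℕ → Fin d → ℝ) {M : ℝ}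
    (hM : ∀ t v, v ⬝ᵥ Dmat d b c x (t + 1) *ᵥ v ≤ M * (v ⬝ᵥ v)) (T : ℕ) :
    ∑ t ∈ Finset.range (T + 1), (x (t + 1) ⬝ᵥ (Dmat d b c x (t + 1))⁻¹ *ᵥ x (t + 1)) ≤
      Real.log (b⁻¹ • Dmat d b c x (T + 1)).det + c⁻¹ * (T * (d * M)) := by
  have hc := hb.trans hbc
  have hl : ∀ t, Real.log (b⁻¹ • Dmat d b c x t).det =
      Real.log (Dmat d b c x t).det - Real.log (b • (1 : Matrix (Fin d) (Fin d) ℝ)).det := by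
    intro t
    have := (Dmat_pd d hb hbc x t).det_pos.ne'
    rw [det_smul, det_smul, det_one, mul_one, inv_pow, Real.log_mul (by positivity) this,
      Real.log_inv]
    ring
  rw [hl]
  induction T with
  | zero =>
    have h := logdet (smul_one_pd d hb) (x 1)
    rw [← A1 d hb hbc x] at h ⊢
    simpa [Dmat] using h
  | succ T ih =>
    rw [Finset.sum_range_succ]
    have hD := Dmat_pd d hb hbc x (T + 1)
    have h := logdet (A_pd hc hD) (x (T + 2))
    have h2 := logdetA hc hD
    have h3 := mul_le_mul_of_nonneg_left (trace_bound (hM T)) (inv_pos.2 hc).le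
    rw [show ((Dmat d b c x (T+1))⁻¹ + c⁻¹ • 1)⁻¹ + vecMulVec (x (T + 2)) (x (T + 2)) =
      Dmat d b c x (T + 2) from rfl] at h
    push_cast
    simp only [show T + 1 + 1 = T + 2 from rfl] at *
    nlinarith

theorem laser_final_bound (d : ℕ) (hd : 1 ≤ d) (b c : ℝ)
    (hb : 0 < b) (hbc : b < c)
    (x : ℕ → Fin d → ℝ) (y : ℕ → ℝ) (X Y : ℝ)
    (hx : ∀ t : ℕ, x (t + 1) ⬝ᵥ x (t + 1) ≤ X ^ 2)
    (hy : ∀ t : ℕ, |y (t + 1)| ≤ Y)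
    (T : ℕ) (hT : 1 ≤ T) (u : ℕ → Fin d → ℝ) :
    laserLoss d b c x y T ≤
      b * (u 1 ⬝ᵥ u 1)
        + ∑ t ∈ Finset.range T, (y (t + 1) - u (t + 1) ⬝ᵥ x (t + 1)) ^ 2
        + Y ^ 2 * Real.log ((b⁻¹ • Dmat d b c x T).det)
        + c⁻¹ * Y ^ 2 * (Dmat d b c x 0).trace
        + c * ∑ t ∈ Finset.range (T - 1),
            (u (t + 2) - u (t + 1)) ⬝ᵥ (u (t + 2) - u (t + 1))
        + c⁻¹ * Y ^ 2 * T * d *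
            max ((3 * X ^ 2 + Real.sqrt (X ^ 4 + 4 * X ^ 2 * c)) / 2) (b + X ^ 2) := by
  have hc := hb.trans hbc
  obtain ⟨M, hMdef⟩ : ∃ M, M = max ((3 * X ^ 2 + Real.sqrt (X ^ 4 + 4 * X ^ 2 * c)) / 2)
    (b + X ^ 2) := ⟨_, rfl⟩
  rw [← hMdef]
  have hM1 : b + X ^ 2 ≤ M := hMdef ▸ le_max_right _ _
  have hM2 : (3 * X ^ 2 + Real.sqrt (X ^ 4 + 4 * X ^ 2 * c)) / 2 ≤ M := hMdef ▸ le_max_left _ _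
  have hX := sq_nonneg X
  have hM0 : 0 ≤ M := by linarith
  have hM3 : c * X ^ 2 + X ^ 2 * M ≤ M ^ 2 := by
    have h4 : Real.sqrt (X ^ 4 + 4 * X ^ 2 * c) ≤ 2 * M - X ^ 2 := by linarith
    have h5 := (Real.sqrt_le_left (by linarith [Real.sqrt_nonneg (X ^ 4 + 4 * X ^ 2 * c)])).1 h4
    nlinarith
  obtain ⟨T, rfl⟩ : ∃ n, T = n + 1 := ⟨T - 1, by omega⟩
  have p1 := part1 d hb hbc x y (T + 1)
  have p2 := part2 d hb hbc x y u T
  have p3 := part3 d hb hbc x (Dbound d hb hbc x hx hM1 hM3) T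
  have p4 := complete_sq (Dmat_pd d hb hbc x (T + 1)) (u (T + 1)) (evec d b c x y (T + 1))
  have p5 : ∑ t ∈ Finset.range (T + 1),
        y (t + 1) ^ 2 * (x (t + 1) ⬝ᵥ (Dmat d b c x (t + 1))⁻¹ *ᵥ x (t + 1)) ≤
        Y ^ 2 * ∑ t ∈ Finset.range (T + 1),
          (x (t + 1) ⬝ᵥ (Dmat d b c x (t + 1))⁻¹ *ᵥ x (t + 1)) := by
    rw [Finset.mul_sum]
    refine Finset.sum_le_sum fun t _ => mul_le_mul_of_nonneg_right ?_
      (qnn (Dmat_pd d hb hbc x (t + 1)).inv _)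
    exact sq_le_sq' (abs_le.1 (hy t)).1 (abs_le.1 (hy t)).2
  have p6 := mul_le_mul_of_nonneg_left p3 (sq_nonneg Y)
  have p7 : 0 ≤ c⁻¹ * Y ^ 2 * (Dmat d b c x 0).trace :=
    mul_nonneg (by positivity) (Dmat_pd d hb hbc x 0).posSemidef.trace_nonneg
  have p8 : 0 ≤ c⁻¹ * Y ^ 2 * d * M := by positivity
  simp only [Nat.add_sub_cancel]
  push_cast
  nlinarith
end

section
/- Assume ‖x_t‖² ≤ X² and |y_t| ≤ Y for all t, with X > 0 and Y > 0. Fix T ≥ 1, a comparator sequence u_1, …, u_T ∈ ℝ^d with total drift V = Σ_{t=1}^{T-1} ‖u_{t+1} − u_t‖² > 0, and 0 < ε < 1. Set c = √(Y²·d·M·T / V), b = ε·c, μ = max{ (9/8)·X², (b + X²)²/(8X²) }, and M = max{ 3X², b + X² }. If V ≥ T·Y²·d·M / μ², then L_T(LASER) ≤ b‖u_1‖² + 2·√(Y²·d·T·M·V) + (ε/(1−ε))·Y²·d + L_T({u_t}) + Y²·ln det((1/b)·D_T), where L_T({u_t}) = Σ_{t=1}^{T} (y_t − u_tᵀ x_t)².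 -/
open Matrix Finset

namespace LaserAux

variable {d : ℕ}

noncomputable abbrev Amat (D : Matrix (Fin d) (Fin d) ℝ) (c : ℝ) : Matrix (Fin d) (Fin d) ℝ :=
  (D⁻¹ + c⁻¹ • 1)⁻¹

lemma inv_mv {D : Matrix (Fin d) (Fin d) ℝ} (hD : D.PosDef) (v : Fin d → ℝ) :
    D⁻¹ *ᵥ (D *ᵥ v) = v := by
  have h := (Matrix.isUnit_iff_isUnit_det _).1 hD.isUnit
  rw [mulVec_mulVec, nonsing_inv_mul _ h, one_mulVec]

lemma mv_inv {D : Matrix (Fin d) (Fin d) ℝ} (hD : D.PosDef) (v : Fin d → ℝ) :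
    D *ᵥ (D⁻¹ *ᵥ v) = v := by
  have h := (Matrix.isUnit_iff_isUnit_det _).1 hD.isUnit
  rw [mulVec_mulVec, mul_nonsing_inv _ h, one_mulVec]

lemma sym {D : Matrix (Fin d) (Fin d) ℝ} (hD : D.PosDef) (v w : Fin d → ℝ) :
    v ⬝ᵥ (D *ᵥ w) = w ⬝ᵥ (D *ᵥ v) := by
  have h : Dᵀ = D := by simpa using hD.isHermitian.eq
  rw [dotProduct_mulVec, ← mulVec_transpose, h, dotProduct_comm]

lemma nn {D : Matrix (Fin d) (Fin d) ℝ} (hD : D.PosDef) (v : Fin d → ℝ) :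
    0 ≤ v ⬝ᵥ (D *ᵥ v) := by
  simpa using hD.posSemidef.dotProduct_mulVec_nonneg v

lemma N_pd {D : Matrix (Fin d) (Fin d) ℝ} (hD : D.PosDef) {c : ℝ} (hc : 0 < c) :
    (D + c • 1).PosDef := hD.add (PosDef.one.smul hc)

lemma Ai_pd {D : Matrix (Fin d) (Fin d) ℝ} (hD : D.PosDef) {c : ℝ} (hc : 0 < c) :
    (D⁻¹ + c⁻¹ • 1).PosDef := hD.inv.add (PosDef.one.smul (inv_pos.2 hc))

lemma A_pd {D : Matrix (Fin d) (Fin d) ℝ} (hD : D.PosDef) {c : ℝ} (hc : 0 < c) :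
    (Amat D c).PosDef := (Ai_pd hD hc).inv

lemma B_pd {D : Matrix (Fin d) (Fin d) ℝ} (hD : D.PosDef) {c : ℝ} (hc : 0 < c) :
    (1 + c⁻¹ • D).PosDef := PosDef.one.add (hD.smul (inv_pos.2 hc))

lemma vmv_psd (x : Fin d → ℝ) : (vecMulVec x x).PosSemidef := by
  simpa using posSemidef_vecMulVec_self_star x

lemma D'_pd {A : Matrix (Fin d) (Fin d) ℝ} (hA : A.PosDef) (x : Fin d → ℝ) :
    (A + vecMulVec x x).PosDef := hA.add_posSemidef (vmv_psd x)

lemma B_eq {D : Matrix (Fin d) (Fin d) ℝ} (hD : D.PosDef) {c : ℝ} (hc : 0 < c)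
    (k : Fin d → ℝ) :
    (1 + c⁻¹ • D)⁻¹ *ᵥ (D *ᵥ k + c • k) = c • k := by
  have : D *ᵥ k + c • k = (1 + c⁻¹ • D) *ᵥ (c • k) := by
    simp only [add_mulVec, one_mulVec, smul_mulVec, mulVec_smul, smul_add, smul_inv_smul₀ hc.ne']
    abel
  rw [this, inv_mv (B_pd hD hc)]

lemma A_eq {D : Matrix (Fin d) (Fin d) ℝ} (hD : D.PosDef) {c : ℝ} (hc : 0 < c)
    (k : Fin d → ℝ) :
    Amat D c *ᵥ (D *ᵥ k + c • k) = c • D *ᵥ k := by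
  have : D *ᵥ k + c • k = (D⁻¹ + c⁻¹ • 1) *ᵥ (c • D *ᵥ k) := by
    simp only [add_mulVec, one_mulVec, smul_mulVec, mulVec_smul, smul_add, smul_inv_smul₀ hc.ne', inv_mv hD]
    abel
  rw [this, inv_mv (Ai_pd hD hc)]

lemma N_eq {D : Matrix (Fin d) (Fin d) ℝ} (hD : D.PosDef) {c : ℝ} (hc : 0 < c)
    (k : Fin d → ℝ) :
    (D + c • 1)⁻¹ *ᵥ (D *ᵥ k + c • k) = k := by
  have : D *ᵥ k + c • k = (D + c • 1) *ᵥ k := by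
    simp only [add_mulVec, one_mulVec, smul_mulVec]
  rw [this, inv_mv (N_pd hD hc)]

lemma exists_k {D : Matrix (Fin d) (Fin d) ℝ} (hD : D.PosDef) {c : ℝ} (hc : 0 < c)
    (e : Fin d → ℝ) : ∃ k, e = D *ᵥ k + c • k := by
  refine ⟨(D + c • 1)⁻¹ *ᵥ e, ?_⟩
  have := mv_inv (N_pd hD hc) e
  simp only [add_mulVec, one_mulVec, smul_mulVec] at this
  exact this.symm

lemma quad {D : Matrix (Fin d) (Fin d) ℝ} (hD : D.PosDef) {c : ℝ} (hc : 0 < c)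
    (u p e : Fin d → ℝ) :
    u ⬝ᵥ (Amat D c *ᵥ u) - 2 * (u ⬝ᵥ ((1 + c⁻¹ • D)⁻¹ *ᵥ e)) - e ⬝ᵥ ((D + c • 1)⁻¹ *ᵥ e)
      ≤ p ⬝ᵥ (D *ᵥ p) - 2 * (p ⬝ᵥ e) + c * ((u - p) ⬝ᵥ (u - p)) := by
  obtain ⟨k, rfl⟩ := exists_k hD hc e
  obtain ⟨w, rfl⟩ := exists_k hD hc u
  rw [B_eq hD hc, A_eq hD hc, N_eq hD hc]
  have h := nn hD (p - (k + c • w))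
  have h2 : 0 ≤ (p - (k + c • w)) ⬝ᵥ (p - (k + c • w)) := by
    simpa using dotProduct_star_self_nonneg (p - (k + c • w))
  have h2 := mul_nonneg hc.le h2
  simp only [add_dotProduct, dotProduct_add, sub_dotProduct, dotProduct_sub, smul_dotProduct,
    dotProduct_smul, mulVec_add, mulVec_sub, mulVec_smul, smul_eq_mul] at h h2 ⊢
  rw [sym hD k p, sym hD w p, sym hD w k] at h
  simp only [dotProduct_comm (D *ᵥ _) _]
  rw [dotProduct_comm k p, dotProduct_comm w p, dotProduct_comm w k] at h2
  rw [dotProduct_comm w p, dotProduct_comm w k]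
  nlinarith [h, h2]

lemma prog {D : Matrix (Fin d) (Fin d) ℝ} (hD : D.PosDef) {c : ℝ} (hc : 0 < c)
    (e x : Fin d → ℝ) :
    let e' := (1 + c⁻¹ • D)⁻¹ *ᵥ e
    let w := (Amat D c + vecMulVec x x)⁻¹ *ᵥ e'
    (x ⬝ᵥ w) ^ 2 + e' ⬝ᵥ w ≤ e ⬝ᵥ (D⁻¹ *ᵥ e) - e ⬝ᵥ ((D + c • 1)⁻¹ *ᵥ e) := by
  intro e' w
  have hA := A_pd hD hc
  have hw : Amat D c *ᵥ w + (x ⬝ᵥ w) • x = e' := by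
    have := mv_inv (D'_pd hA x) e'
    rw [add_mulVec, vecMulVec_mulVec] at this
    simpa [w] using this
  have key : e ⬝ᵥ (D⁻¹ *ᵥ e) - e ⬝ᵥ ((D + c • 1)⁻¹ *ᵥ e)
      = e' ⬝ᵥ ((D⁻¹ + c⁻¹ • 1) *ᵥ e') := by
    obtain ⟨k, rfl⟩ := exists_k hD hc e
    simp only [e', B_eq hD hc, N_eq hD hc]
    simp only [add_dotProduct, dotProduct_add, smul_dotProduct, smul_mulVec, add_mulVec,
      one_mulVec, dotProduct_smul, mulVec_add, mulVec_smul, smul_eq_mul, inv_mv hD]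
    rw [dotProduct_comm (D *ᵥ k) (D⁻¹ *ᵥ k), sym hD (D⁻¹ *ᵥ k) k, mv_inv hD,
      inv_mul_cancel_left₀ hc.ne']
    ring
  have hz : (Amat D c) *ᵥ ((D⁻¹ + c⁻¹ • 1) *ᵥ x) = x := inv_mv (Ai_pd hD hc) x
  have hAw : (D⁻¹ + c⁻¹ • 1) *ᵥ (Amat D c *ᵥ w) = w := mv_inv (Ai_pd hD hc) w
  rw [key, ← hw, mulVec_add, mulVec_smul, hAw]
  have hs := nn (Ai_pd hD hc) x
  set z := (D⁻¹ + c⁻¹ • 1) *ᵥ x with hzdef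
  have h1 : (Amat D c *ᵥ w) ⬝ᵥ z = x ⬝ᵥ w := by
    rw [dotProduct_comm, sym hA, hz, dotProduct_comm]
  simp only [add_dotProduct, dotProduct_add, smul_dotProduct, dotProduct_smul, smul_eq_mul, h1]
  nlinarith [mul_nonneg (sq_nonneg (x ⬝ᵥ w)) hs]

lemma logdet {P : Matrix (Fin d) (Fin d) ℝ} (hP : P.PosDef) :
    Real.log P.det ≤ P.trace - d := by
  have h1 := hP.isHermitian.det_eq_prod_eigenvalues
  have h2 := hP.isHermitian.trace_eq_sum_eigenvalues
  simp only [RCLike.ofReal_real_eq_id, id] at h1 h2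
  rw [h1, h2, Real.log_prod (fun i _ => (hP.eigenvalues_pos i).ne')]
  calc _ ≤ ∑ i, (hP.isHermitian.eigenvalues i - 1) :=
        Finset.sum_le_sum fun i _ => Real.log_le_sub_one_of_pos (hP.eigenvalues_pos i)
    _ = _ := by simp

lemma log1 {A : Matrix (Fin d) (Fin d) ℝ} (hA : A.PosDef) (x : Fin d → ℝ) :
    x ⬝ᵥ ((A + vecMulVec x x)⁻¹ *ᵥ x) ≤
      Real.log (A + vecMulVec x x).det - Real.log A.det := by
  have hdet : (A + vecMulVec x x).det = A.det * (1 + x ⬝ᵥ (A⁻¹ *ᵥ x)) := by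
    have h : IsUnit A.det := (Matrix.isUnit_iff_isUnit_det _).1 hA.isUnit
    have : A + vecMulVec x x = A * (1 + vecMulVec (A⁻¹ *ᵥ x) x) := by
      rw [mul_add, mul_one, mul_vecMulVec, mv_inv hA]
    rw [this, det_mul, vecMulVec_eq Unit, det_one_add_replicateCol_mul_replicateRow]
  have hs := nn hA.inv x
  set s := x ⬝ᵥ (A⁻¹ *ᵥ x) with hsd
  have hw : (A + vecMulVec x x)⁻¹ *ᵥ x = (1 + s)⁻¹ • (A⁻¹ *ᵥ x) := by
    have : x = (A + vecMulVec x x) *ᵥ ((1 + s)⁻¹ • (A⁻¹ *ᵥ x)) := by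
      rw [mulVec_smul, add_mulVec, mv_inv hA, vecMulVec_mulVec, ← hsd]
      have h1 : x + MulOpposite.op s • x = (1 + s) • x := by
        rw [add_smul, one_smul]; simp
      rw [h1, smul_smul, inv_mul_cancel₀ (by positivity), one_smul]
    have h4 := inv_mv (D'_pd hA x) ((1 + s)⁻¹ • (A⁻¹ *ᵥ x))
    rwa [← this] at h4
  rw [hw, hdet, Real.log_mul hA.det_pos.ne' (by positivity), dotProduct_smul, ← hsd, smul_eq_mul]
  have := Real.one_sub_inv_le_log_of_pos (show 0 < 1 + s by positivity)
  have h3 : (1 + s)⁻¹ * s = 1 - (1 + s)⁻¹ := by field_simp; ring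
  linarith

lemma log2 {D : Matrix (Fin d) (Fin d) ℝ} (hD : D.PosDef) {c : ℝ} (hc : 0 < c) :
    Real.log D.det ≤ Real.log (Amat D c).det + c⁻¹ * D.trace := by
  have h := (Matrix.isUnit_iff_isUnit_det _).1 hD.isUnit
  have hi := (Matrix.isUnit_iff_isUnit_det _).1 (Ai_pd hD hc).isUnit
  have : D = Amat D c * (1 + c⁻¹ • D) := by
    have h2 : (1 + c⁻¹ • D) = (D⁻¹ + c⁻¹ • 1) * D := by
      rw [add_mul, nonsing_inv_mul _ h, smul_mul_assoc, one_mul]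
    rw [h2, ← mul_assoc, nonsing_inv_mul _ hi, one_mul]
  have hB := B_pd hD hc
  have h3 : D.det = (Amat D c).det * (1 + c⁻¹ • D).det := by
    rw [← det_mul, ← this]
  have h4 := logdet hB
  rw [h3, Real.log_mul (A_pd hD hc).det_pos.ne' hB.det_pos.ne']
  simp only [trace_add, trace_one, trace_smul, Fintype.card_fin, smul_eq_mul] at h4
  linarith

lemma traceA {D : Matrix (Fin d) (Fin d) ℝ} (hD : D.PosDef) {c : ℝ} (hc : 0 < c) (a : ℝ) :
    (Amat D c).trace ≤ a ^ 2 * D.trace + c * (1 - a) ^ 2 * d := by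
  have h : ∀ i, (Amat D c) i i ≤ a ^ 2 * D i i + c * (1 - a) ^ 2 := by
    intro i
    have h := quad hD hc (Pi.single i 1) (a • Pi.single i 1) 0
    have e : (Pi.single i 1 : Fin d → ℝ) - a • Pi.single i 1 = (1 - a) • Pi.single i 1 := by
      rw [sub_smul, one_smul]
    rw [e] at h
    simp only [mulVec_zero, dotProduct_zero, zero_dotProduct, mulVec_smul, smul_dotProduct,
      dotProduct_smul, smul_eq_mul] at h
    simp at h
    nlinarith [h]
  calc (Amat D c).trace = ∑ i, (Amat D c) i i := rfl
    _ ≤ ∑ i, (a ^ 2 * D i i + c * (1 - a) ^ 2) := Finset.sum_le_sum fun i _ => h i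
    _ = _ := by
      rw [Finset.sum_add_distrib, ← Finset.mul_sum]
      simp [Matrix.trace]; ring

lemma D_pd {b c : ℝ} (hb : 0 < b) (hbc : b < c) (x : ℕ → Fin d → ℝ) (t : ℕ) :
    (Dmat d b c x t).PosDef := by
  have hc := hb.trans hbc
  induction t with
  | zero => exact PosDef.one.smul (div_pos (mul_pos hb hc) (sub_pos.2 hbc))
  | succ t ih => exact D'_pd (A_pd ih hc) _

noncomputable def fval (d : ℕ) (b c : ℝ) (x : ℕ → Fin d → ℝ) (y : ℕ → ℝ) : ℕ → ℝ
  | 0 => 0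
  | (t + 1) => fval d b c x y t
      - evec d b c x y t ⬝ᵥ ((Dmat d b c x t + c • 1)⁻¹ *ᵥ evec d b c x y t) + y (t + 1) ^ 2

noncomputable def Pot (d : ℕ) (b c : ℝ) (x : ℕ → Fin d → ℝ) (y : ℕ → ℝ) (t : ℕ) : ℝ :=
  fval d b c x y t - evec d b c x y t ⬝ᵥ ((Dmat d b c x t)⁻¹ *ᵥ evec d b c x y t)

noncomputable def Pf (d : ℕ) (b c : ℝ) (x : ℕ → Fin d → ℝ) (y : ℕ → ℝ) (t : ℕ)
    (u : Fin d → ℝ) : ℝ :=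
  u ⬝ᵥ (Dmat d b c x t *ᵥ u) - 2 * (u ⬝ᵥ evec d b c x y t) + fval d b c x y t

lemma Pot_le_Pf {b c : ℝ} (hb : 0 < b) (hbc : b < c) (x : ℕ → Fin d → ℝ) (y : ℕ → ℝ) (t : ℕ)
    (u : Fin d → ℝ) : Pot d b c x y t ≤ Pf d b c x y t u := by
  have hD := D_pd hb hbc x t
  unfold Pot Pf
  generalize Dmat d b c x t = D at *
  generalize evec d b c x y t = e
  have h := nn hD (u - D⁻¹ *ᵥ e)
  rw [mulVec_sub, mv_inv hD, sub_dotProduct, dotProduct_sub, dotProduct_sub,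
    sym hD (D⁻¹ *ᵥ e) u, mv_inv hD, dotProduct_comm (D⁻¹ *ᵥ e) e] at h
  linarith

lemma Pf_step {b c : ℝ} (hb : 0 < b) (hbc : b < c) (x : ℕ → Fin d → ℝ) (y : ℕ → ℝ) (t : ℕ)
    (u p : Fin d → ℝ) : Pf d b c x y (t + 1) u ≤
      Pf d b c x y t p + c * ((u - p) ⬝ᵥ (u - p)) + (y (t + 1) - u ⬝ᵥ x (t + 1)) ^ 2 := by
  have h := quad (D_pd hb hbc x t) (hb.trans hbc) u p (evec d b c x y t)
  unfold Pf
  simp only [Dmat, evec, fval, add_mulVec, vecMulVec_mulVec, dotProduct_add, dotProduct_smul,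
    smul_eq_mul, MulOpposite.smul_eq_mul_unop, MulOpposite.unop_op]
  rw [dotProduct_comm (x (t + 1)) u]
  nlinarith [h]

lemma Pot_step {b c : ℝ} (hb : 0 < b) (hbc : b < c) (x : ℕ → Fin d → ℝ) (y : ℕ → ℝ) (t : ℕ) :
    (y (t + 1) - laserPred d b c x y t) ^ 2 + Pot d b c x y t ≤ Pot d b c x y (t + 1)
      + y (t + 1) ^ 2 * (x (t + 1) ⬝ᵥ ((Dmat d b c x (t + 1))⁻¹ *ᵥ x (t + 1))) := by
  have h := prog (D_pd hb hbc x t) (hb.trans hbc) (evec d b c x y t) (x (t + 1))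
  have hD' := D_pd hb hbc x (t + 1)
  have hDe : Dmat d b c x (t + 1) =
    Amat (Dmat d b c x t) c + vecMulVec (x (t + 1)) (x (t + 1)) := rfl
  simp only [← hDe] at h
  unfold Pot laserPred
  simp only [evec, fval]
  generalize (1 + c⁻¹ • Dmat d b c x t)⁻¹ *ᵥ evec d b c x y t = e' at *
  generalize Dmat d b c x (t + 1) = D' at *
  simp only [mulVec_add, mulVec_smul, dotProduct_add, add_dotProduct, smul_dotProduct,
    dotProduct_smul, smul_eq_mul]
  rw [sym hD'.inv e' (x (t + 1))]
  nlinarith [h]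

lemma loss_le {b c : ℝ} (hb : 0 < b) (hbc : b < c) (x : ℕ → Fin d → ℝ) (y : ℕ → ℝ) {Y : ℝ}
    (hy : ∀ t : ℕ, |y (t + 1)| ≤ Y) (T : ℕ) :
    laserLoss d b c x y T ≤ Pot d b c x y T + Y ^ 2 * (Real.log (Dmat d b c x T).det
      - Real.log (Dmat d b c x 0).det + c⁻¹ * ∑ t ∈ range T, (Dmat d b c x t).trace) := by
  induction T with
  | zero => simp [laserLoss, Pot, fval, evec]
  | succ T ih =>
    have hc := hb.trans hbc
    have h1 := Pot_step hb hbc x y T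
    have h2 := log1 (A_pd (D_pd hb hbc x T) hc) (x (T + 1))
    have h3 := log2 (D_pd hb hbc x T) hc
    have h5 := nn (D_pd hb hbc x (T + 1)).inv (x (T + 1))
    have h4 : y (T + 1) ^ 2 ≤ Y ^ 2 := sq_le_sq' (abs_le.1 (hy T)).1 (abs_le.1 (hy T)).2
    change x (T + 1) ⬝ᵥ ((Dmat d b c x (T + 1))⁻¹ *ᵥ x (T + 1)) ≤
      Real.log (Dmat d b c x (T + 1)).det - _ at h2
    have h6 := mul_le_mul_of_nonneg_right h4 h5
    have h7 := mul_le_mul_of_nonneg_left (h2.trans (sub_le_sub_left (sub_le_iff_le_add.2 h3) _))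
      (sq_nonneg Y)
    unfold laserLoss at *
    rw [sum_range_succ, sum_range_succ]
    nlinarith [h1, h6, h7, ih]

lemma Pf_le {b c : ℝ} (hb : 0 < b) (hbc : b < c) (x : ℕ → Fin d → ℝ) (y : ℕ → ℝ)
    (u : ℕ → Fin d → ℝ) (n : ℕ) :
    Pf d b c x y (n + 1) (u (n + 1)) ≤ b * (u 1 ⬝ᵥ u 1)
      + c * ∑ t ∈ range n, (u (t + 2) - u (t + 1)) ⬝ᵥ (u (t + 2) - u (t + 1))
      + ∑ t ∈ range (n + 1), (y (t + 1) - u (t + 1) ⬝ᵥ x (t + 1)) ^ 2 := by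
  have hc := hb.trans hbc
  have hcb := sub_pos.2 hbc
  induction n with
  | zero =>
    have h := Pf_step hb hbc x y 0 (u 1) (((c - b) / c) • u 1)
    have e : u 1 - ((c - b) / c) • u 1 = (b / c) • u 1 := by
      have h1 : b / c = 1 - (c - b) / c := by field_simp; ring
      rw [h1, sub_smul, one_smul]
    rw [e] at h
    simp only [Pf, Dmat, evec, fval, smul_mulVec, one_mulVec, smul_dotProduct, dotProduct_smul,
      smul_eq_mul, dotProduct_zero] at h ⊢
    simp only [zero_add, range_one, sum_singleton, range_zero, sum_empty] at h ⊢
    refine h.trans (le_of_eq ?_)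
    field_simp
    ring
  | succ n ih =>
    have h := Pf_step hb hbc x y (n + 1) (u (n + 2)) (u (n + 1))
    rw [sum_range_succ _ (n + 1), sum_range_succ _ n]
    linarith

lemma trace_le (hd : 1 ≤ d) {b c M X : ℝ} (hb : 0 < b) (hbc : b < c) (x : ℕ → Fin d → ℝ)
    (hx : ∀ t : ℕ, x (t + 1) ⬝ᵥ x (t + 1) ≤ X ^ 2) (hM0 : 0 < M) (hM1 : b + X ^ 2 ≤ M)
    (hM2 : X ^ 2 * (M + c) ≤ M ^ 2) (t : ℕ) :
    (Dmat d b c x (t + 1)).trace ≤ d * M := by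
  have hc := hb.trans hbc
  have hcb := sub_pos.2 hbc
  have hd' : (1 : ℝ) ≤ d := by exact_mod_cast hd
  have hXd : X ^ 2 ≤ d * X ^ 2 := le_mul_of_one_le_left (sq_nonneg X) hd'
  have hstep : ∀ t a, (Dmat d b c x (t + 1)).trace ≤
      a ^ 2 * (Dmat d b c x t).trace + c * (1 - a) ^ 2 * d + X ^ 2 := by
    intro t a
    have h := traceA (D_pd hb hbc x t) hc a
    have : (Dmat d b c x (t + 1)).trace = (Amat (Dmat d b c x t) c).trace
        + x (t + 1) ⬝ᵥ x (t + 1) := by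
      rw [← trace_vecMulVec, ← trace_add]; rfl
    linarith [hx t]
  induction t with
  | zero =>
    have h := hstep 0 ((c - b) / c)
    have e : ((c - b) / c) ^ 2 * (Dmat d b c x 0).trace + c * (1 - (c - b) / c) ^ 2 * d
        = d * b := by
      simp only [Dmat, trace_smul, trace_one, Fintype.card_fin, smul_eq_mul]
      field_simp
      ring
    nlinarith
  | succ t ih =>
    have h := hstep (t + 1) (c / (M + c))
    have h1 : (c / (M + c)) ^ 2 * (Dmat d b c x (t + 1)).trace ≤ (c / (M + c)) ^ 2 * (d * M) :=
      mul_le_mul_of_nonneg_left ih (sq_nonneg _)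
    have e : (c / (M + c)) ^ 2 * (d * M) + c * (1 - c / (M + c)) ^ 2 * d
        = d * (M * c / (M + c)) := by
      field_simp
      ring
    have h2 : M * c / (M + c) + X ^ 2 ≤ M := by
      rw [← le_sub_iff_add_le, div_le_iff₀ (by positivity)]
      nlinarith
    nlinarith

end LaserAux

open LaserAux in
set_option maxHeartbeats 1000000 in
theorem laser_regret_high_drift (d : ℕ) (hd : 1 ≤ d)
    (x : ℕ → Fin d → ℝ) (y : ℕ → ℝ) (X Y : ℝ) (hX : 0 < X) (hY : 0 < Y)
    (hx : ∀ t : ℕ, x (t + 1) ⬝ᵥ x (t + 1) ≤ X ^ 2)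
    (hy : ∀ t : ℕ, |y (t + 1)| ≤ Y)
    (T : ℕ) (hT : 1 ≤ T) (u : ℕ → Fin d → ℝ) (V : ℝ)
    (hV : V = ∑ t ∈ Finset.range (T - 1),
        (u (t + 2) - u (t + 1)) ⬝ᵥ (u (t + 2) - u (t + 1)))
    (hVpos : 0 < V)
    (ε : ℝ) (hε0 : 0 < ε) (hε1 : ε < 1)
    (b c μ M : ℝ)
    (hc : c = Real.sqrt (Y ^ 2 * d * M * T / V))
    (hb : b = ε * c)
    (hμ : μ = max ((9 / 8) * X ^ 2) ((b + X ^ 2) ^ 2 / (8 * X ^ 2)))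
    (hM : M = max (3 * X ^ 2) (b + X ^ 2))
    (hhigh : V ≥ T * (Y ^ 2 * d * M) / μ ^ 2) :
    laserLoss d b c x y T ≤
      b * (u 1 ⬝ᵥ u 1)
        + 2 * Real.sqrt (Y ^ 2 * d * T * M * V)
        + (ε / (1 - ε)) * Y ^ 2 * d
        + ∑ t ∈ Finset.range T, (y (t + 1) - u (t + 1) ⬝ᵥ x (t + 1)) ^ 2
        + Y ^ 2 * Real.log ((b⁻¹ • Dmat d b c x T).det) := by
  have hdR : (1 : ℝ) ≤ d := by exact_mod_cast hd
  have hd0 : (0 : ℝ) < d := by linarith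
  have hTR : (1 : ℝ) ≤ T := by exact_mod_cast hT
  have hT0 : (0 : ℝ) < T := by linarith
  have hX2 : 0 < X ^ 2 := by positivity
  have hM3 : 3 * X ^ 2 ≤ M := hM ▸ le_max_left _ _
  have hMb : b + X ^ 2 ≤ M := hM ▸ le_max_right _ _
  have hM0 : 0 < M := by linarith
  have hc0 : 0 < c := by rw [hc]; positivity
  have hb0 : 0 < b := by rw [hb]; positivity
  have hbc : b < c := by rw [hb]; nlinarith
  have hc2 : c ^ 2 * V = Y ^ 2 * d * M * T := by
    rw [hc, Real.sq_sqrt (by positivity)]; field_simp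
  have hμ0 : 0 < μ := lt_of_lt_of_le (by positivity) (hμ ▸ le_max_left _ _)
  have hcμ : c ≤ μ := by
    have h1 : T * (Y ^ 2 * d * M) ≤ V * μ ^ 2 := (div_le_iff₀ (by positivity)).1 hhigh
    have h2 : V * c ^ 2 ≤ V * μ ^ 2 := by linarith
    exact le_of_sq_le_sq (le_of_mul_le_mul_left h2 hVpos) hμ0.le
  have hM2 : X ^ 2 * (M + c) ≤ M ^ 2 := by
    have h1 : X ^ 2 * μ ≤ M ^ 2 / 8 := by
      rw [hμ, mul_max_of_nonneg _ _ hX2.le]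
      refine max_le ?_ ?_
      · nlinarith
      · have : X ^ 2 * ((b + X ^ 2) ^ 2 / (8 * X ^ 2)) = (b + X ^ 2) ^ 2 / 8 := by field_simp
        rw [this]
        have : (b + X ^ 2) ^ 2 ≤ M ^ 2 := pow_le_pow_left₀ (by positivity) hMb 2
        linarith
    nlinarith [mul_le_mul_of_nonneg_left hcμ hX2.le]
  obtain ⟨n, rfl⟩ : ∃ n, T = n + 1 := ⟨T - 1, by omega⟩
  simp only [Nat.add_sub_cancel] at hV
  have hL := loss_le hb0 hbc x y hy (n + 1)
  have hP := (Pot_le_Pf hb0 hbc x y (n + 1) (u (n + 1))).trans (Pf_le hb0 hbc x y u n)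
  rw [← hV] at hP
  have htr : ∑ t ∈ range (n + 1), (Dmat d b c x t).trace ≤ d * (b * c / (c - b)) + n * (d * M) := by
    rw [sum_range_succ']
    have h0 : (Dmat d b c x 0).trace = d * (b * c / (c - b)) := by
      simp only [Dmat, trace_smul, trace_one, Fintype.card_fin, smul_eq_mul]; ring
    have h1 : ∑ t ∈ range n, (Dmat d b c x (t + 1)).trace ≤ ∑ t ∈ range n, (d * M) :=
      sum_le_sum fun t _ => trace_le hd hb0 hbc x hx hM0 hMb hM2 t
    simp only [sum_const, card_range, nsmul_eq_mul] at h1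
    linarith
  have hDT := (D_pd hb0 hbc x (n + 1)).det_pos
  have hlog : Real.log (Dmat d b c x (n + 1)).det - Real.log (Dmat d b c x 0).det ≤
      Real.log ((b⁻¹ • Dmat d b c x (n + 1)).det) := by
    have hcb := sub_pos.2 hbc
    simp only [Dmat.eq_1, det_smul, det_one, mul_one, Fintype.card_fin]
    rw [Real.log_mul (by positivity) hDT.ne', Real.log_pow, Real.log_pow, Real.log_inv]
    have : Real.log b ≤ Real.log (b * c / (c - b)) := by
      apply Real.log_le_log hb0
      rw [le_div_iff₀ hcb]
      nlinarith
    nlinarith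
  have hs : Real.sqrt (Y ^ 2 * d * ((n + 1 : ℕ) : ℝ) * M * V) = c * V := by
    rw [show Y ^ 2 * d * ((n + 1 : ℕ) : ℝ) * M * V = (c * V) ^ 2 by linear_combination (-V) * hc2]
    exact Real.sqrt_sq (by positivity)
  rw [hs]
  have hε : c⁻¹ * (d * (b * c / (c - b))) = ε / (1 - ε) * d := by
    have : 0 < 1 - ε := by linarith
    have h2 : c - b = c * (1 - ε) := by rw [hb]; ring
    rw [h2, hb, div_mul_eq_mul_div, mul_div_assoc', mul_div_assoc', div_eq_div_iff (by positivity) (by positivity)]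
    have h3 : c⁻¹ * c = 1 := inv_mul_cancel₀ hc0.ne'
    linear_combination (ε * d * c * (1 - ε)) * h3
  have hn : Y ^ 2 * (c⁻¹ * (n * (d * M))) ≤ c * V := by
    have h1 : c * V = c⁻¹ * (Y ^ 2 * d * M * ((n + 1 : ℕ) : ℝ)) := by
      rw [← hc2]; field_simp
    rw [h1]
    push_cast
    have : 0 ≤ c⁻¹ * (Y ^ 2 * d * M) := by positivity
    linarith
  have h1 := mul_le_mul_of_nonneg_left htr (inv_pos.2 hc0).le
  have h2 := mul_le_mul_of_nonneg_left (add_le_add hlog h1) (sq_nonneg Y)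
  rw [mul_add (c⁻¹), hε] at h2
  linarith [hL, hP, h2, hn]
end
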